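/- Every cycle permutation graph G satisfies χ'_irr(G) ≤ 3, i.e., G admits a locally irregular edge-coloring using at most 3 colors. -/

import Mathlib

/-- A graph is *locally irregular* if no two adjacent vertices have the same degree. -/
def LocallyIrregular {V : Type*} (G : SimpleGraph V) : Prop :=
  ∀ ⦃u v : V⦄, G.Adj u v → (G.neighborSet u).ncard ≠ (G.neighborSet v).ncard

/-- `HasLIEC G k` : `G` admits a locally irregular edge-coloring using at most `k` colors,
i.e. an assignment of one of `k` colors to every edge such that the edges of each fixed
color induce a locally irregular graph. -/
def HasLIEC {V : Type*} (G : SimpleGraph V) (k : ℕ) : Prop :=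
  ∃ c : Sym2 V → Fin k, ∀ i : Fin k,
    LocallyIrregular (SimpleGraph.fromEdgeSet {e | e ∈ G.edgeSet ∧ c e = i})

/-- The cycle on `ZMod n` (for `n ≥ 3`) : `i` is adjacent to `i ± 1`. -/
def cycleGraph (n : ℕ) : SimpleGraph (ZMod n) :=
  SimpleGraph.fromRel (fun i j => i - j = 1)

/-- The cycle permutation graph `P_φ(C_n, C_n)` : two disjoint copies of the cycle `C_n`
(each on `ZMod n`) together with the perfect matching `{ v φ(v) : v in the first copy }`. -/
def cyclePermGraph (n : ℕ) (φ : ZMod n ≃ ZMod n) : SimpleGraph (ZMod n ⊕ ZMod n) :=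
  SimpleGraph.fromRel (fun x y =>
    match x, y with
    | Sum.inl i, Sum.inl j => i - j = 1
    | Sum.inl i, Sum.inr w => φ i = w
    | Sum.inr a, Sum.inr b => (cycleGraph n).Adj a b
    | Sum.inr _, Sum.inl _ => False)

/-!
Color the first cycle with `0` alone and let its vertices have, alternately, a matching edge of
color `0` and one of color `1` or `2`: their degrees in color `0` then alternate between `3` and
`2`. The second cycle uses only the colors `1` and `2`. Walk along it and record, for each edge,
its color and the degree of its tail in that color; disregarding degree `3`, these are four states
in cyclic order. A vertex whose matching edge has color `0` advances the state by one, and a vertex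
whose matching edge may be colored `1` or `2` can advance it by two. Two consecutive vertices of the
latter kind can also pass through a vertex of degree `3`, and so produce any total advance; hence
the walk can be closed up.

For even `n` there is such a pair unless the alternation is inherited by the second cycle, and in
that case the two cycles can be given the colors `0` and `1`. For odd `n` the alternation breaks at
one edge `{-1, 0}` of the first cycle, which receives the color `2`; rotations and a reflection make
`0` one of the two vertices matched to the consecutive pair.
-/

section LocallyIrregular

variable {V W : Type*} {G : SimpleGraph V} {H : SimpleGraph W} {k : ℕ}

theorem LocallyIrregular.of_iso (e : G ≃g H) (hH : LocallyIrregular H) : LocallyIrregular G := by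
  have ncard_eq (v : V) : (G.neighborSet v).ncard = (H.neighborSet (e v)).ncard :=
    Nat.card_congr (e.mapNeighborSet v)
  intro u v huv
  rw [ncard_eq, ncard_eq]
  exact hH (e.map_adj_iff.mpr huv)

theorem HasLIEC.of_iso (e : G ≃g H) : HasLIEC H k → HasLIEC G k := by
  rintro ⟨c, hc⟩
  refine ⟨c ∘ Sym2.map e, fun x => .of_iso ⟨e.toEquiv, ?_⟩ (hc x)⟩
  simp [e.map_adj_iff]

theorem ncard_fiber_of_nodup {α β : Type*} [DecidableEq β] {l : List α} (hl : l.Nodup)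
    (f : α → β) (b : β) : {a | a ∈ l ∧ f a = b}.ncard = (l.map f).count b := by
  classical
  rw [List.count, List.countP_map, List.countP_eq_length_filter,
    ← List.toFinset_card_of_nodup (hl.filter _), ← Set.ncard_coe_finset]
  congr 1
  ext a
  simp

theorem exists_sym2_apply_eq_of_adj {C : Type*} (f : V → V → C)
    (hf : ∀ u v, G.Adj u v → f u v = f v u) :
    ∃ c : Sym2 V → C, ∀ u v, G.Adj u v → c s(u, v) = f u v := by
  refine ⟨fun e => f e.out.1 e.out.2, fun u v huv => ?_⟩
  have hout : s((Quot.out s(u, v)).1, (Quot.out s(u, v)).2) = s(u, v) := Quot.out_eq _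
  rcases Sym2.eq_iff.mp hout with ⟨h₁, h₂⟩ | ⟨h₁, h₂⟩
  · simp only [h₁, h₂]
  · simp only [h₁, h₂, hf u v huv]

theorem hasLIEC_of_neighborList (N : V → List V) (hnodup : ∀ v, (N v).Nodup)
    (hN : ∀ v w, G.Adj v w ↔ w ∈ N v) (f : V → V → Fin k)
    (hf : ∀ u v, G.Adj u v → f u v = f v u)
    (hne : ∀ u v, G.Adj u v →
      ((N u).map (f u)).count (f u v) ≠ ((N v).map (f v)).count (f u v)) :
    HasLIEC G k := by
  obtain ⟨c, hc⟩ := exists_sym2_apply_eq_of_adj f hf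
  refine ⟨c, fun x => ?_⟩
  set Gx := SimpleGraph.fromEdgeSet {e | e ∈ G.edgeSet ∧ c e = x}
  have adj_iff (u v : V) : Gx.Adj u v ↔ G.Adj u v ∧ f u v = x := by
    simp only [Gx, SimpleGraph.fromEdgeSet_adj, Set.mem_ofPred_eq, SimpleGraph.mem_edgeSet]
    constructor
    · rintro ⟨⟨huv, hx⟩, -⟩
      exact ⟨huv, hc u v huv ▸ hx⟩
    · rintro ⟨huv, hx⟩
      exact ⟨⟨huv, (hc u v huv).trans hx⟩, huv.ne⟩
  have ncard_eq (v : V) : (Gx.neighborSet v).ncard = ((N v).map (f v)).count x := by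
    rw [← ncard_fiber_of_nodup (hnodup v)]
    congr 1
    ext w
    simp [adj_iff, hN]
  intro u v huv
  obtain ⟨hG, hx⟩ := (adj_iff u v).mp huv
  rw [ncard_eq, ncard_eq, ← hx]
  exact hne u v hG

end LocallyIrregular

section Symmetries

variable {n : ℕ}

theorem cycleGraph_adj_iff [Nontrivial (ZMod n)] {i j : ZMod n} :
    (cycleGraph n).Adj i j ↔ j = i + 1 ∨ i = j + 1 := by
  have ne_add_one (a : ZMod n) : a ≠ a + 1 := by simp
  rw [cycleGraph, SimpleGraph.fromRel_adj, sub_eq_iff_eq_add', sub_eq_iff_eq_add', add_comm j,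
    add_comm i]
  grind

/-- The automorphism `i ↦ i + a` of the cycle. -/
def cycleRotation (a : ZMod n) : cycleGraph n ≃g cycleGraph n where
  toEquiv := Equiv.addRight a
  map_rel_iff' := by simp [cycleGraph]

@[simp]
theorem cycleRotation_apply (a i : ZMod n) : cycleRotation a i = i + a :=
  rfl

@[simp]
theorem cycleRotation_symm_apply (a i : ZMod n) : (cycleRotation a).symm i = i - a :=
  (sub_eq_add_neg i a).symm

/-- The automorphism `i ↦ a - i` of the cycle. -/
def cycleReflection (a : ZMod n) : cycleGraph n ≃g cycleGraph n where
  toEquiv := Equiv.subLeft a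
  map_rel_iff' := by simp [cycleGraph, or_comm]

@[simp]
theorem cycleReflection_symm_apply (a i : ZMod n) : (cycleReflection a).symm i = a - i :=
  neg_add_eq_sub i a

variable {φ : ZMod n ≃ ZMod n} {i j : ZMod n}

theorem cyclePermGraph_adj_inl_inl :
    (cyclePermGraph n φ).Adj (.inl i) (.inl j) ↔ (cycleGraph n).Adj i j := by
  simp [cyclePermGraph, cycleGraph]

theorem cyclePermGraph_adj_inr_inr :
    (cyclePermGraph n φ).Adj (.inr i) (.inr j) ↔ (cycleGraph n).Adj i j := by
  simpa [cyclePermGraph, SimpleGraph.adj_comm _ j i] using SimpleGraph.Adj.ne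

theorem cyclePermGraph_adj_inl_inr :
    (cyclePermGraph n φ).Adj (.inl i) (.inr j) ↔ φ i = j := by
  simp [cyclePermGraph]

theorem cyclePermGraph_adj_inr_inl :
    (cyclePermGraph n φ).Adj (.inr j) (.inl i) ↔ φ i = j := by
  rw [SimpleGraph.adj_comm, cyclePermGraph_adj_inl_inr]

/-- The matching `τ ∘ φ ∘ σ⁻¹` into which automorphisms `σ` and `τ` of the two cycles turn `φ`. -/
def twist (σ : cycleGraph n ≃g cycleGraph n) (φ : ZMod n ≃ ZMod n)
    (τ : cycleGraph n ≃g cycleGraph n) : ZMod n ≃ ZMod n :=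
  (σ.symm.toEquiv.trans φ).trans τ.toEquiv

@[simp]
theorem twist_symm_apply (σ τ : cycleGraph n ≃g cycleGraph n) (φ : ZMod n ≃ ZMod n) (j : ZMod n) :
    (twist σ φ τ).symm j = σ (φ.symm (τ.symm j)) :=
  rfl

/-- The isomorphism of cycle permutation graphs given by automorphisms of the two cycles. -/
def cyclePermGraphIso (σ : cycleGraph n ≃g cycleGraph n) (φ : ZMod n ≃ ZMod n)
    (τ : cycleGraph n ≃g cycleGraph n) :
    cyclePermGraph n φ ≃g cyclePermGraph n (twist σ φ τ) where
  toEquiv := Equiv.sumCongr σ.toEquiv τ.toEquiv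
  map_rel_iff' := by
    rintro (i | i) (j | j) <;>
      simp [twist, cyclePermGraph_adj_inl_inl, cyclePermGraph_adj_inr_inr,
        cyclePermGraph_adj_inl_inr, cyclePermGraph_adj_inr_inl, σ.map_adj_iff, τ.map_adj_iff]

end Symmetries

section Colorings

variable {n k : ℕ}

/-- The colors at the vertex `i` of a cycle whose edges `{i, i + 1}` have color `α i` and whose
pendant edge at `i` has color `μ i`. -/
def colorsAt (α μ : ZMod n → Fin k) (i : ZMod n) : List (Fin k) :=
  [α i, α (i - 1), μ i]

/-- Local irregularity along a cycle with pendant edges: in the color of a cycle edge, its two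
ends have distinct degrees. Here `α` and `μ` are as in `colorsAt`. -/
def CycleIrregular (α μ : ZMod n → Fin k) : Prop :=
  ∀ i, (colorsAt α μ i).count (α i) ≠ (colorsAt α μ (i + 1)).count (α i)

/-- The edge-coloring of the cycle giving `{i, i + 1}` the color `α i`, as a function of two
adjacent vertices. -/
def cycleColor (α : ZMod n → Fin k) (i j : ZMod n) : Fin k :=
  if j = i + 1 then α i else α j

/-- The edge-coloring of a cycle permutation graph given by the colors `α` and `β` of the two
cycles and the colors of the matching edges, indexed by the first cycle in `μ` and by the second
one in `ν`. -/
def permColor (α β μ ν : ZMod n → Fin k) : ZMod n ⊕ ZMod n → ZMod n ⊕ ZMod n → Fin k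
  | .inl i, .inl j => cycleColor α i j
  | .inr i, .inr j => cycleColor β i j
  | .inl i, .inr _ => μ i
  | .inr j, .inl _ => ν j

/-- The three neighbors of a vertex of a cycle permutation graph, in the order of `colorsAt`. -/
def permNeighbors (φ : ZMod n ≃ ZMod n) : ZMod n ⊕ ZMod n → List (ZMod n ⊕ ZMod n)
  | .inl i => [.inl (i + 1), .inl (i - 1), .inr (φ i)]
  | .inr j => [.inr (j + 1), .inr (j - 1), .inl (φ.symm j)]

theorem add_one_ne_sub_one (hn : 3 ≤ n) (i : ZMod n) : i + 1 ≠ i - 1 := by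
  intro h
  have two_eq_zero : ((2 : ℕ) : ZMod n) = 0 := by
    push_cast
    linear_combination h
  exact absurd (Nat.le_of_dvd two_pos ((ZMod.natCast_eq_zero_iff 2 n).mp two_eq_zero)) (by lia)

theorem cycleColor_add_one (α : ZMod n → Fin k) (i : ZMod n) : cycleColor α i (i + 1) = α i :=
  if_pos rfl

theorem cycleColor_sub_one (hn : 3 ≤ n) (α : ZMod n → Fin k) (i : ZMod n) :
    cycleColor α i (i - 1) = α (i - 1) :=
  if_neg (add_one_ne_sub_one hn i).symm

theorem cycleColor_comm (hn : 3 ≤ n) (α : ZMod n → Fin k) {i j : ZMod n}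
    (hij : (cycleGraph n).Adj i j) : cycleColor α i j = cycleColor α j i := by
  have := ZMod.nontrivial_iff.mpr (show n ≠ 1 by lia)
  have add_one_comm (i : ZMod n) : cycleColor α i (i + 1) = cycleColor α (i + 1) i := by
    simpa [cycleColor_add_one] using (cycleColor_sub_one hn α (i + 1)).symm
  rcases cycleGraph_adj_iff.mp hij with rfl | rfl
  · exact add_one_comm i
  · exact (add_one_comm j).symm

theorem permNeighbors_nodup (hn : 3 ≤ n) (φ : ZMod n ≃ ZMod n) (v : ZMod n ⊕ ZMod n) :
    (permNeighbors φ v).Nodup := by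
  rcases v with i | i <;> simp [permNeighbors, add_one_ne_sub_one hn]

theorem cyclePermGraph_adj_iff_mem_permNeighbors [Nontrivial (ZMod n)] (φ : ZMod n ≃ ZMod n)
    (v w : ZMod n ⊕ ZMod n) : (cyclePermGraph n φ).Adj v w ↔ w ∈ permNeighbors φ v := by
  rcases v with i | i <;> rcases w with j | j <;>
    simp [permNeighbors, cyclePermGraph_adj_inl_inl, cyclePermGraph_adj_inr_inr,
      cyclePermGraph_adj_inl_inr, cyclePermGraph_adj_inr_inl, cycleGraph_adj_iff,
      eq_sub_iff_add_eq, eq_comm, Equiv.eq_symm_apply]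

theorem map_permColor_inl (hn : 3 ≤ n) (φ : ZMod n ≃ ZMod n) (α β μ ν : ZMod n → Fin k)
    (i : ZMod n) :
    (permNeighbors φ (.inl i)).map (permColor α β μ ν (.inl i)) = colorsAt α μ i := by
  simp [permNeighbors, permColor, colorsAt, cycleColor_add_one, cycleColor_sub_one hn]

theorem map_permColor_inr (hn : 3 ≤ n) (φ : ZMod n ≃ ZMod n) (α β μ ν : ZMod n → Fin k)
    (j : ZMod n) :
    (permNeighbors φ (.inr j)).map (permColor α β μ ν (.inr j)) = colorsAt β ν j := by
  simp [permNeighbors, permColor, colorsAt, cycleColor_add_one, cycleColor_sub_one hn]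

theorem CycleIrregular.count_ne_of_adj (hn : 3 ≤ n) {α μ : ZMod n → Fin k}
    (h : CycleIrregular α μ) {i j : ZMod n} (hij : (cycleGraph n).Adj i j) :
    (colorsAt α μ i).count (cycleColor α i j) ≠ (colorsAt α μ j).count (cycleColor α i j) := by
  have := ZMod.nontrivial_iff.mpr (show n ≠ 1 by lia)
  rcases cycleGraph_adj_iff.mp hij with rfl | rfl
  · rw [cycleColor_add_one]
    exact h i
  · rw [cycleColor_comm hn α hij, cycleColor_add_one]
    exact (h j).symm

theorem hasLIEC_of_cycleIrregular (hn : 3 ≤ n) (φ : ZMod n ≃ ZMod n)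
    (α β μ : ZMod n → Fin k) (hα : CycleIrregular α μ) (hβ : CycleIrregular β (μ ∘ φ.symm))
    (hμ : ∀ i, (colorsAt α μ i).count (μ i) ≠ (colorsAt β (μ ∘ φ.symm) (φ i)).count (μ i)) :
    HasLIEC (cyclePermGraph n φ) k := by
  have := ZMod.nontrivial_iff.mpr (show n ≠ 1 by lia)
  refine hasLIEC_of_neighborList (permNeighbors φ) (permNeighbors_nodup hn φ)
    (cyclePermGraph_adj_iff_mem_permNeighbors φ) (permColor α β μ (μ ∘ φ.symm)) ?symm ?irregular
  case symm =>
    rintro (i | i) (j | j) h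
    · exact cycleColor_comm hn α (cyclePermGraph_adj_inl_inl.mp h)
    · obtain rfl := cyclePermGraph_adj_inl_inr.mp h
      simp [permColor]
    · obtain rfl := cyclePermGraph_adj_inr_inl.mp h
      simp [permColor]
    · exact cycleColor_comm hn β (cyclePermGraph_adj_inr_inr.mp h)
  case irregular =>
    rintro (i | i) (j | j) h <;> simp only [map_permColor_inl hn, map_permColor_inr hn]
    · exact hα.count_ne_of_adj hn (cyclePermGraph_adj_inl_inl.mp h)
    · obtain rfl := cyclePermGraph_adj_inl_inr.mp h
      exact hμ i
    · obtain rfl := cyclePermGraph_adj_inr_inl.mp h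
      simpa [permColor] using (hμ j).symm
    · exact hβ.count_ne_of_adj hn (cyclePermGraph_adj_inr_inr.mp h)

end Colorings

section Chains

variable {S A : Type*}

/-- `Reaches R m a b` says that `b` can be reached from `a` by `m` successive transitions, the
`i`-th of them in `R i`. -/
def Reaches (R : ℕ → S → S → Prop) : ℕ → S → S → Prop
  | 0 => Eq
  | m + 1 => Relation.Comp (Reaches R m) (R m)

theorem Reaches.exists_seq {R : ℕ → S → S → Prop} {m : ℕ} {a b : S} (h : Reaches R m a b) :
    ∃ s : ℕ → S, s 0 = a ∧ s m = b ∧ ∀ i < m, R i (s i) (s (i + 1)) := by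
  induction m generalizing b with
  | zero => exact ⟨fun _ => a, rfl, h, by simp⟩
  | succ m ih =>
    obtain ⟨c, hac, hcb⟩ := h
    obtain ⟨s, h₀, hm, hs⟩ := ih hac
    have update_of_le {i : ℕ} (hi : i ≤ m) : Function.update s (m + 1) b i = s i :=
      Function.update_of_ne (by lia) b s
    refine ⟨Function.update s (m + 1) b, by simpa using h₀, by simp, fun i hi => ?_⟩
    rw [update_of_le (Nat.lt_succ_iff.mp hi)]
    rcases (Nat.lt_succ_iff.mp hi).lt_or_eq with hlt | rfl
    · rw [update_of_le hlt]
      exact hs i hlt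
    · rwa [Function.update_self, hm]

theorem exists_cyclic_of_reaches {n : ℕ} [NeZero n] {R : ZMod n → S → S → Prop} {a : S}
    (h : Reaches (fun i => R i) n a a) : ∃ s : ZMod n → S, ∀ j, R j (s j) (s (j + 1)) := by
  obtain ⟨s, h₀, hn, hs⟩ := h.exists_seq
  refine ⟨fun j => s j.val, fun j => ?_⟩
  have s_val_add_one : s (j + 1).val = s (j.val + 1) := by
    rw [ZMod.val_add, ZMod.val_one_eq_one_mod, Nat.add_mod_mod]
    rcases (Nat.succ_le_iff.mpr j.val_lt).lt_or_eq with hlt | heq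
    · rw [Nat.mod_eq_of_lt hlt]
    · rw [← Nat.succ_eq_add_one, heq, Nat.mod_self, h₀, hn]
  simpa [s_val_add_one] using hs j.val j.val_lt

/-- `R` contains a transition from every state encoded by `y` to the state encoded by `y + w`. -/
def Translates [Add A] (code : A → S) (R : S → S → Prop) (w : A) : Prop :=
  ∀ y, R (code y) (code (y + w))

theorem exists_reaches_add [AddMonoid A] {code : A → S} {R : ℕ → S → S → Prop} {k m : ℕ}
    (hkm : k ≤ m) (hR : ∀ i, k ≤ i → i < m → ∃ w, Translates code (R i) w) :
    ∃ w, ∀ a y, Reaches R k a (code y) → Reaches R m a (code (y + w)) := by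
  induction m, hkm using Nat.le_induction with
  | base => exact ⟨0, fun a y h => by rwa [add_zero]⟩
  | succ m hkm ih =>
    obtain ⟨w, hw⟩ := ih fun i hki him => hR i hki (him.trans m.lt_succ_self)
    obtain ⟨v, hv⟩ := hR m hkm m.lt_succ_self
    refine ⟨w + v, fun a y h => ⟨code (y + w), hw a y h, ?_⟩⟩
    rw [← add_assoc]
    exact hv (y + w)

theorem exists_cyclic_of_translates [AddGroup A] {code : A → S} {n k : ℕ} [NeZero n] (hkn : k ≤ n)
    {R : ZMod n → S → S → Prop}
    (hflex : ∀ t, ∃ y, Reaches (fun i => R i) k (code y) (code (y + t)))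
    (hR : ∀ j : ZMod n, k ≤ j.val → ∃ w, Translates code (R j) w) :
    ∃ s : ZMod n → S, ∀ j, R j (s j) (s (j + 1)) := by
  obtain ⟨w, hw⟩ := exists_reaches_add (code := code) (R := fun i => R i) hkn fun i hki hin =>
    hR i (by rwa [ZMod.val_cast_of_lt hin])
  obtain ⟨y, hy⟩ := hflex (-w)
  have hclosed := hw (code y) (y + -w) hy
  rw [neg_add_cancel_right] at hclosed
  exact exists_cyclic_of_reaches hclosed

end Chains

section Completion

variable {n k : ℕ}

/-- A possible passage along the second cycle through a vertex `v`. A state consists of the color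
of a cycle edge and the degree, in this color, of its tail; `s` and `t` are the states of the edges
entering and leaving `v`. The matching edge at `v` takes some color in `M`, and its other end has
cycle edges of colors `a` and `b`. -/
def Transition (a b : Fin k) (M : Finset (Fin k)) (s t : Fin k × ℕ) : Prop :=
  ∃ m ∈ M, [t.1, s.1, m].count t.1 = t.2 ∧ [t.1, s.1, m].count s.1 ≠ s.2 ∧
    [a, b, m].count m ≠ [t.1, s.1, m].count m

instance (a b : Fin k) (M : Finset (Fin k)) (s t : Fin k × ℕ) : Decidable (Transition a b M s t) :=
  inferInstanceAs (Decidable (∃ m ∈ M, _))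

theorem hasLIEC_of_transitions (hn : 3 ≤ n) (φ : ZMod n ≃ ZMod n) (α : ZMod n → Fin k)
    (M : ZMod n → Finset (Fin k)) (hα : ∀ μ, (∀ i, μ i ∈ M i) → CycleIrregular α μ)
    (s : ZMod n → Fin k × ℕ)
    (hs : ∀ j, Transition (α (φ.symm j)) (α (φ.symm j - 1)) (M (φ.symm j)) (s j) (s (j + 1))) :
    HasLIEC (cyclePermGraph n φ) k := by
  choose ν hνM htail hhead hmatching using hs
  have colorsAt_eq (j : ZMod n) :
      colorsAt (fun j => (s (j + 1)).1) ν j = [(s (j + 1)).1, (s j).1, ν j] := by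
    simp [colorsAt]
  have comp_symm : (ν ∘ φ) ∘ φ.symm = ν := by
    ext j
    simp
  refine hasLIEC_of_cycleIrregular hn φ α (fun j => (s (j + 1)).1) (ν ∘ φ)
    (hα _ fun i => by simpa using hνM (φ i)) ?second_cycle ?matching
  case second_cycle =>
    intro j
    rw [comp_symm, colorsAt_eq, colorsAt_eq, htail j]
    exact (hhead (j + 1)).symm
  case matching =>
    intro i
    rw [comp_symm, colorsAt_eq]
    simpa [colorsAt] using hmatching (φ i)

end Completion

section States

/-- The four states over the colors `1` and `2` in which the tail has degree at most `2`, in the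
cyclic order in which they follow one another along a path without matching edges. -/
def pathState (y : ZMod 4) : Fin 3 × ℕ :=
  (![(1, 1), (1, 2), (2, 1), (2, 2)] : Fin 4 → Fin 3 × ℕ) y

/-- The effect of an unrestricted vertex on states: translation by `w` on those listed by
`pathState`, while the state `(1, 3)` can go to both `w` and `w + 1`. -/
structure IsShift (R : Fin 3 × ℕ → Fin 3 × ℕ → Prop) (w : ZMod 4) : Prop where
  translates : Translates pathState R w
  to_state : R (1, 3) (pathState w)
  to_state_add_one : R (1, 3) (pathState (w + 1))

theorem isShift_transition_zero {a b : Fin 3} (h : [a, b, 0].count 0 ≠ 1) :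
    IsShift (Transition a b {0}) 1 := by
  have translates : ∀ a b : Fin 3, [a, b, 0].count 0 ≠ 1 →
      ∀ y, Transition a b {0} (pathState y) (pathState (y + 1)) := by decide
  have from_excess : ∀ a b : Fin 3, [a, b, 0].count 0 ≠ 1 →
      Transition a b {0} (1, 3) (pathState 1) ∧ Transition a b {0} (1, 3) (pathState (1 + 1)) := by
    decide
  exact ⟨translates a b h, (from_excess a b h).1, (from_excess a b h).2⟩

theorem isShift_transition_one_two : IsShift (Transition 0 0 {1, 2}) 2 :=
  ⟨by unfold Translates; decide, by decide, by decide⟩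

theorem exists_reaches_two {R : ℕ → Fin 3 × ℕ → Fin 3 × ℕ → Prop}
    (h₀ : R 0 = Transition 0 0 {1, 2}) (h₁ : IsShift (R 1) 2) (t : ZMod 4) :
    ∃ y, Reaches R 2 (pathState y) (pathState (y + t)) := by
  have from_zero : R 0 (pathState 0) (1, 3) := h₀ ▸ by decide
  have from_one : R 0 (pathState 1) (1, 3) := h₀ ▸ by decide
  have from_zero_to_two : R 0 (pathState 0) (pathState 2) := h₀ ▸ by decide
  have reaches {a b c} (hab : R 0 a b) (hbc : R 1 b c) : Reaches R 2 a c := ⟨b, ⟨a, rfl, hab⟩, hbc⟩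
  fin_cases t
  · exact ⟨0, reaches from_zero_to_two (h₁.translates 2)⟩
  · exact ⟨1, reaches from_one h₁.to_state⟩
  · exact ⟨0, reaches from_zero h₁.to_state⟩
  · exact ⟨0, reaches from_zero h₁.to_state_add_one⟩

theorem exists_reaches_three {R : ℕ → Fin 3 × ℕ → Fin 3 × ℕ → Prop} {a b : Fin 3}
    (ha : a ≠ 1) (hb : b ≠ 1) (h₀ : R 0 = Transition 0 2 {2}) (h₁ : R 1 = Transition a b {1})
    {w : ZMod 4} (h₂ : IsShift (R 2) w) (t : ZMod 4) :
    ∃ y, Reaches R 3 (pathState y) (pathState (y + t)) := by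
  have via_two : ∀ a b : Fin 3, a ≠ 1 → b ≠ 1 → Transition a b {1} (2, 3) (pathState 1) := by decide
  have via_one : ∀ a b : Fin 3, a ≠ 1 → b ≠ 1 → Transition a b {1} (pathState 1) (1, 3) := by decide
  have from_two : Reaches R 2 (pathState 2) (pathState 1) :=
    ⟨(2, 3), ⟨pathState 2, rfl, h₀ ▸ by decide⟩, h₁ ▸ via_two a b ha hb⟩
  have from_three : Reaches R 2 (pathState 3) (pathState 1) :=
    ⟨(2, 3), ⟨pathState 3, rfl, h₀ ▸ by decide⟩, h₁ ▸ via_two a b ha hb⟩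
  have from_zero : Reaches R 2 (pathState 0) (1, 3) :=
    ⟨pathState 1, ⟨pathState 0, rfl, h₀ ▸ by decide⟩, h₁ ▸ via_one a b ha hb⟩
  have exhaust : ∀ d : ZMod 4, d = 0 ∨ d = 1 ∨ d = 2 ∨ d = 3 := by decide
  have four_eq_zero : (4 : ZMod 4) = 0 := rfl
  obtain ⟨d, rfl⟩ : ∃ d, t = w + d := ⟨t - w, by ring⟩
  rcases exhaust d with rfl | rfl | rfl | rfl
  · exact ⟨0, (1, 3), from_zero, by simpa using h₂.to_state⟩
  · exact ⟨0, (1, 3), from_zero, by simpa using h₂.to_state_add_one⟩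
  · refine ⟨3, pathState 1, from_three, ?_⟩
    rw [show 3 + (w + 2) = 1 + w by linear_combination four_eq_zero]
    exact h₂.translates 1
  · refine ⟨2, pathState 1, from_two, ?_⟩
    rw [show 2 + (w + 3) = 1 + w by linear_combination four_eq_zero]
    exact h₂.translates 1

end States

section Even

variable {n : ℕ}

theorem cycleIrregular_const_iff {k : ℕ} {c : Fin k} {μ : ZMod n → Fin k} :
    CycleIrregular (fun _ => c) μ ↔ ∀ i, ¬(μ i = c ↔ μ (i + 1) = c) := by
  simp only [CycleIrregular, colorsAt, List.count_cons, beq_iff_eq]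
  refine forall_congr' fun i => ?_
  split_ifs <;> simp_all

theorem parity_add_one_eq_iff (π : ZMod n →+* ZMod 2) (i : ZMod n) (r : ZMod 2) :
    π (i + 1) = r ↔ π i ≠ r := by
  rw [map_add, map_one]
  generalize π i = x
  revert x r
  decide

theorem hasLIEC_of_parity_zero_eq_parity_one (hn : 3 ≤ n) (π : ZMod n →+* ZMod 2)
    (φ : ZMod n ≃ ZMod n) (h : π (φ.symm 0) = π (φ.symm 1)) :
    HasLIEC (cyclePermGraph n φ) 3 := by
  have : NeZero n := ⟨by lia⟩
  set M : ZMod n → Finset (Fin 3) := fun i => if π i = π (φ.symm 0) then {1, 2} else {0} with hM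
  have hα (μ : ZMod n → Fin 3) (hμ : ∀ i, μ i ∈ M i) : CycleIrregular (fun _ => 0) μ := by
    have eq_zero_iff (i : ZMod n) : μ i = 0 ↔ π i ≠ π (φ.symm 0) := by
      have := hμ i
      by_cases hi : π i = π (φ.symm 0) <;> grind
    rw [cycleIrregular_const_iff]
    intro i
    rw [eq_zero_iff, eq_zero_iff, ne_eq (π (i + 1)), parity_add_one_eq_iff]
    tauto
  have isShift (j : ZMod n) : ∃ w, IsShift (Transition 0 0 (M (φ.symm j))) w := by
    by_cases hj : π (φ.symm j) = π (φ.symm 0)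
    · exact ⟨2, by simpa only [hM, if_pos hj] using isShift_transition_one_two⟩
    · exact ⟨1, by simpa only [hM, if_neg hj] using isShift_transition_zero (by decide)⟩
  obtain ⟨s, hs⟩ := exists_cyclic_of_translates (k := 2) (by lia)
    (R := fun j => Transition 0 0 (M (φ.symm j)))
    (exists_reaches_two (by simp [hM])
      (by simpa [hM, h] using isShift_transition_one_two))
    fun j _ => (isShift j).imp fun _ => IsShift.translates
  exact hasLIEC_of_transitions hn φ (fun _ => 0) M hα s hs

theorem hasLIEC_of_parity_alternates (hn : 3 ≤ n) (π : ZMod n →+* ZMod 2) (φ : ZMod n ≃ ZMod n)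
    (h : ∀ j, π (φ.symm j) ≠ π (φ.symm (j + 1))) : HasLIEC (cyclePermGraph n φ) 3 := by
  set μ : ZMod n → Fin 3 := fun i => if π i = 0 then 0 else 1 with hμ
  refine hasLIEC_of_cycleIrregular hn φ (fun _ => 0) (fun _ => 1) μ ?first ?second ?matching
  case first =>
    rw [cycleIrregular_const_iff]
    intro i
    simp [hμ, parity_add_one_eq_iff, -map_add]
  case second =>
    have not_iff : ∀ x y : ZMod 2, x ≠ y → ¬(x = 0 ↔ y = 0) := by decide
    rw [cycleIrregular_const_iff]
    intro j
    simpa [hμ, not_iff_not] using not_iff _ _ (h j)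
  case matching =>
    intro i
    by_cases hi : π i = 0 <;> simp [hμ, colorsAt, hi]

theorem hasLIEC_cyclePermGraph_of_even (hn : 3 ≤ n) (he : Even n) (φ : ZMod n ≃ ZMod n) :
    HasLIEC (cyclePermGraph n φ) 3 := by
  let π : ZMod n →+* ZMod 2 := ZMod.castHom he.two_dvd (ZMod 2)
  by_cases h : ∃ j, π (φ.symm j) = π (φ.symm (j + 1))
  · obtain ⟨j, hj⟩ := h
    refine .of_iso (cyclePermGraphIso .refl φ (cycleRotation (-j)))
      (hasLIEC_of_parity_zero_eq_parity_one hn π _ ?_)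
    simpa [add_comm] using hj
  · push Not at h
    exact hasLIEC_of_parity_alternates hn π φ h

end Even

section Odd

variable {n : ℕ}

/-- The coloring of the first cycle for odd `n`: only the edge `{-1, 0}` does not have color
`0`. -/
def oddCycleColor (i : ZMod n) : Fin 3 :=
  if i = -1 then 2 else 0

/-- The colors permitted for the matching edge at the vertex `i` of the first cycle for odd `n`,
when the vertices `0` and `q` are matched to adjacent vertices. The color `2` at `0` ensures that
the ends of `{-1, 0}` differ in their degrees in color `2`. -/
def oddMatchingColors (q i : ZMod n) : Finset (Fin 3) :=
  if i = 0 then {2} else if i = q then {1} else if Even i.val ∧ i ≠ -1 then {1, 2} else {0}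

theorem even_val_neg_one (ho : Odd n) : Even (-1 : ZMod n).val := by
  obtain ⟨m, rfl⟩ := ho
  rw [ZMod.val_neg_one]
  exact even_two_mul m

theorem val_add_one_of_ne_neg_one [NeZero n] {i : ZMod n} (hi : i ≠ -1) :
    (i + 1).val = i.val + 1 := by
  have val_add_one_ne : i.val + 1 ≠ n := by
    contrapose hi
    rw [eq_neg_iff_add_eq_zero, ← ZMod.natCast_zmod_val i]
    exact_mod_cast (ZMod.natCast_eq_zero_iff _ n).mpr (dvd_of_eq hi.symm)
  rw [ZMod.val_add, ZMod.val_one_eq_one_mod, Nat.add_mod_mod,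
    Nat.mod_eq_of_lt (lt_of_le_of_ne i.val_lt val_add_one_ne)]

theorem oddCycleColor_ne_one (i : ZMod n) : oddCycleColor i ≠ 1 := by
  unfold oddCycleColor
  split_ifs <;> decide

theorem oddCycleColor_eq_zero_iff {i : ZMod n} : oddCycleColor i = 0 ↔ i ≠ -1 := by
  simp [oddCycleColor]

theorem eq_zero_iff_of_mem_oddMatchingColors {q i : ZMod n} {m : Fin 3}
    (hm : m ∈ oddMatchingColors q i) : m = 0 ↔ i ≠ 0 ∧ i ≠ q ∧ (Odd i.val ∨ i = -1) := by
  unfold oddMatchingColors at hm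
  grind

theorem count_zero_eq_three_iff_odd_val (ho : Odd n) {q : ZMod n} (hq : Even q.val)
    {μ : ZMod n → Fin 3} (hμ : ∀ i, μ i ∈ oddMatchingColors q i) (i : ZMod n) :
    (colorsAt oddCycleColor μ i).count 0 = 3 ↔ Odd i.val := by
  have count_eq_three_iff : (colorsAt oddCycleColor μ i).count 0 = 3 ↔
      oddCycleColor i = 0 ∧ oddCycleColor (i - 1) = 0 ∧ μ i = 0 := by
    simpa [colorsAt, eq_comm] using
      List.count_eq_length (a := (0 : Fin 3)) (l := colorsAt oddCycleColor μ i)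
  have even_of_eq_neg_one : i = -1 → Even i.val := by
    rintro rfl
    exact even_val_neg_one ho
  have even_of_eq_zero : i = 0 → Even i.val := by
    rintro rfl
    simp
  have even_of_eq_q : i = q → Even i.val := by
    rintro rfl
    exact hq
  rw [count_eq_three_iff, oddCycleColor_eq_zero_iff, oddCycleColor_eq_zero_iff,
    eq_zero_iff_of_mem_oddMatchingColors (hμ i), ← Nat.not_even_iff_odd, ne_eq (i - 1),
    sub_eq_neg_self]
  tauto

theorem cycleIrregular_oddCycleColor (hn : 3 ≤ n) (ho : Odd n) {q : ZMod n} (hq : Even q.val)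
    {μ : ZMod n → Fin 3} (hμ : ∀ i, μ i ∈ oddMatchingColors q i) :
    CycleIrregular oddCycleColor μ := by
  have : NeZero n := ⟨by lia⟩
  have := ZMod.nontrivial_iff.mpr (show n ≠ 1 by lia)
  intro i
  by_cases hi : i = -1
  · subst hi
    have color_zero : μ 0 = 2 := by simpa [oddMatchingColors] using hμ 0
    have color_neg_one : μ (-1) ≠ 2 := by
      have := hμ (-1)
      have neg_one_ne_zero : (-1 : ZMod n) ≠ 0 := neg_ne_zero.mpr one_ne_zero
      unfold oddMatchingColors at this
      grind
    simp [colorsAt, oddCycleColor, color_zero, color_neg_one]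
  · rw [oddCycleColor_eq_zero_iff.mpr hi]
    intro heq
    have := count_zero_eq_three_iff_odd_val ho hq hμ i
    rw [heq, count_zero_eq_three_iff_odd_val ho hq hμ, val_add_one_of_ne_neg_one hi] at this
    grind

theorem exists_isShift_oddMatchingColors {q i : ZMod n} (h₀ : i ≠ 0) (hq : i ≠ q) :
    ∃ w, IsShift
      (Transition (oddCycleColor i) (oddCycleColor (i - 1)) (oddMatchingColors q i)) w := by
  have color_sub_one : oddCycleColor (i - 1) = 0 := by
    rwa [oddCycleColor_eq_zero_iff, ne_eq, sub_eq_neg_self]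
  rw [oddMatchingColors, if_neg h₀, if_neg hq, color_sub_one]
  split_ifs with h
  · rw [oddCycleColor_eq_zero_iff.mpr h.2]
    exact ⟨2, isShift_transition_one_two⟩
  · refine ⟨1, isShift_transition_zero ?_⟩
    generalize oddCycleColor i = a
    revert a
    decide

theorem hasLIEC_of_symm_zero_eq_zero (hn : 3 ≤ n) (ho : Odd n) (φ : ZMod n ≃ ZMod n)
    (h₀ : φ.symm 0 = 0) (h₁ : Even (φ.symm 1).val) : HasLIEC (cyclePermGraph n φ) 3 := by
  have : NeZero n := ⟨by lia⟩
  have : Fact (1 < n) := ⟨by lia⟩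
  have symm_one_ne_zero : φ.symm 1 ≠ 0 := fun h => one_ne_zero (φ.symm.injective (h.trans h₀.symm))
  have isShift {j : ZMod n} (hj : 2 ≤ j.val) :
      ∃ w, IsShift (Transition (oddCycleColor (φ.symm j)) (oddCycleColor (φ.symm j - 1))
        (oddMatchingColors (φ.symm 1) (φ.symm j))) w := by
    apply exists_isShift_oddMatchingColors
    · rintro h
      obtain rfl : j = 0 := φ.symm.injective (h.trans h₀.symm)
      simp at hj
    · rintro h
      obtain rfl : j = 1 := φ.symm.injective h
      simp [ZMod.val_one] at hj
  obtain ⟨w, hw⟩ := isShift (j := (2 : ℕ)) (by rw [ZMod.val_cast_of_lt (by lia)])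
  obtain ⟨s, hs⟩ := exists_cyclic_of_translates (k := 3) hn
    (R := fun j => Transition (oddCycleColor (φ.symm j)) (oddCycleColor (φ.symm j - 1))
      (oddMatchingColors (φ.symm 1) (φ.symm j)))
    (exists_reaches_three (oddCycleColor_ne_one (φ.symm 1)) (oddCycleColor_ne_one (φ.symm 1 - 1))
      (by simp [h₀, oddMatchingColors, oddCycleColor])
      (by simp [oddMatchingColors, symm_one_ne_zero]) hw)
    fun j hj => (isShift (by lia)).imp fun _ => IsShift.translates
  exact hasLIEC_of_transitions hn φ oddCycleColor _
    (fun μ hμ => cycleIrregular_oddCycleColor hn ho h₁ hμ) s hs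

theorem even_val_neg_of_not_even [NeZero n] (ho : Odd n) {i : ZMod n} (hi : ¬Even i.val) :
    Even (-i).val := by
  have : NeZero i := ⟨by rintro rfl; simp at hi⟩
  rw [ZMod.val_neg_of_ne_zero]
  exact Nat.Odd.sub_odd ho (Nat.not_even_iff_odd.mp hi)

theorem hasLIEC_cyclePermGraph_of_odd (hn : 3 ≤ n) (ho : Odd n) (φ : ZMod n ≃ ZMod n) :
    HasLIEC (cyclePermGraph n φ) 3 := by
  have : NeZero n := ⟨by lia⟩
  by_cases hd : Even (φ.symm 1 - φ.symm 0).val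
  · refine .of_iso (cyclePermGraphIso (cycleRotation (-φ.symm 0)) φ .refl)
      (hasLIEC_of_symm_zero_eq_zero hn ho _ ?_ ?_)
    · simp
    · simpa [← sub_eq_add_neg] using hd
  · have hd' : Even (φ.symm 0 - φ.symm 1).val := by
      rw [← neg_sub]
      exact even_val_neg_of_not_even ho hd
    refine .of_iso (cyclePermGraphIso (cycleRotation (-φ.symm 1)) φ (cycleReflection 1))
      (hasLIEC_of_symm_zero_eq_zero hn ho _ ?_ ?_)
    · simp
    · simpa [← sub_eq_add_neg] using hd'

end Odd

/-- Every cycle permutation graph admits a locally irregular edge-coloring with at most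
3 colors. -/
theorem cyclePermGraph_LIEC (n : ℕ) (hn : 3 ≤ n) (φ : ZMod n ≃ ZMod n) :
    HasLIEC (cyclePermGraph n φ) 3 := by
  rcases n.even_or_odd with he | ho
  · exact hasLIEC_cyclePermGraph_of_even hn he φ
  · exact hasLIEC_cyclePermGraph_of_odd hn ho φ
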